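/- Let k ≥ 1 be an integer and let h be a holomorphic function on an open neighborhood of 0 in ℂ² whose vanishing order at 0 equals 4k, and suppose that the line {z₁ = 0} is not tangent to the zero set of h at 0, in the sense that the one-variable holomorphic function z₂ ↦ h(0, z₂) has vanishing order exactly 4k at 0. Define f(z₁, z₂) = z₁^{k} · h(z₁, z₂). Then for every real c with 0 < c < 1/(4k), the function z ↦ |f(z)|^{-2c} is integrable on some open neighborhood of 0 with respect to Lebesgue measure on ℂ² ≅ ℝ⁴; in particular c₀(f) ≥ 1/(4k) > 2/(9k). (Integrability claim in Case 2 of the proof of Theorem 4.1.) -/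

import Mathlib

open MeasureTheory

lemma layer_bound {α : Type*} [MeasurableSpace α] (μ : Measure α) (g : α → ℝ) (hg0 : ∀ x, 0 ≤ g x)
    (hg : AEMeasurable g μ) (K p a : ℝ) (hK : 0 ≤ K) (hp : 0 < p) (hpa : p < a)
    (H : ∀ ε : ℝ, 0 < ε → μ {x | g x ≤ ε} ≤ ENNReal.ofReal (K * ε ^ a)) :
    ∫⁻ x, ENNReal.ofReal (g x ^ (-p)) ∂μ ≤
      μ Set.univ + ENNReal.ofReal (∫ t in Set.Ioi (1:ℝ), K * t ^ (-(a / p))) := by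
  rw [lintegral_eq_lintegral_meas_lt μ (Filter.Eventually.of_forall fun x => Real.rpow_nonneg (hg0 x) _)
    (hg.pow_const _)]
  have hsplit : Set.Ioi (0:ℝ) = Set.Ioc 0 1 ∪ Set.Ioi 1 := by
    rw [Set.Ioc_union_Ioi_eq_Ioi zero_le_one]
  rw [hsplit]
  refine (lintegral_union_le _ _ _).trans (add_le_add ?_ ?_)
  · calc _ ≤ ∫⁻ t in Set.Ioc (0:ℝ) 1, μ Set.univ := lintegral_mono fun t => measure_mono (Set.subset_univ _)
      _ = _ := by simp
  · have hap : -(a/p) < -1 := by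
      have : 1 < a / p := by rwa [one_lt_div hp]
      linarith
    have hint := (integrableOn_Ioi_rpow_of_lt hap zero_lt_one).const_mul K
    rw [ofReal_integral_eq_lintegral_ofReal hint]
    · refine setLIntegral_mono' measurableSet_Ioi fun t ht => ?_
      have ht0 : (0:ℝ) < t := zero_lt_one.trans ht
      have key : μ {x | g x ≤ t ^ (-(1/p))} ≤ _ := H _ (Real.rpow_pos_of_pos ht0 _)
      rw [← Real.rpow_mul ht0.le] at key
      have e : -(1/p) * a = -(a/p) := by ring
      rw [e] at key
      refine (measure_mono fun x hx => ?_).trans key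
      simp only [Set.mem_ofPred_eq] at hx ⊢
      by_contra hcon
      push Not at hcon
      have h1 : 0 < t ^ (-(1/p)) := Real.rpow_pos_of_pos ht0 _
      have h2 : g x ^ (-p) < (t ^ (-(1/p))) ^ (-p) := Real.rpow_lt_rpow_of_neg h1 hcon (by linarith)
      rw [← Real.rpow_mul ht0.le] at h2
      have e2 : -(1/p) * -p = 1 := by field_simp
      rw [e2, Real.rpow_one] at h2
      linarith
    · filter_upwards [ae_restrict_mem measurableSet_Ioi] with t ht
      exact mul_nonneg hK (Real.rpow_nonneg (zero_lt_one.trans ht).le _)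

lemma exists_sep {E : Set ℂ} {s : ℝ} {N : ℕ} (hs0 : 0 ≤ s)
    (hE : ∀ F : Finset ℂ, F.card ≤ N → ¬ E ⊆ ⋃ x ∈ F, Metric.closedBall x s) :
    ∀ m ≤ N + 1, ∃ F : Finset ℂ, F.card = m ∧ (F : Set ℂ) ⊆ E ∧
      ∀ x ∈ F, ∀ y ∈ F, x ≠ y → s ≤ dist x y := by
  intro m
  induction m with
  | zero => intro _; exact ⟨∅, by simp⟩
  | succ m ih =>
    intro hm
    obtain ⟨F, hc, hFE, hF⟩ := ih (by omega)
    obtain ⟨x, hxE, hx⟩ := Set.not_subset.1 (hE F (by omega))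
    simp only [Set.mem_iUnion, Metric.mem_closedBall, not_exists, not_le] at hx
    by_cases hxF : x ∈ F
    · have hs := hx x hxF
      simp only [dist_self] at hs
      linarith
    refine ⟨insert x F, by rw [Finset.card_insert_of_notMem hxF, hc], ?_, ?_⟩
    · rw [Finset.coe_insert]; exact Set.insert_subset hxE hFE
    · intro a ha b hb hab
      rw [Finset.mem_insert] at ha hb
      rcases ha with rfl | ha <;> rcases hb with rfl | hb
      · exact absurd rfl hab
      · exact (hx b hb).le
      · rw [dist_comm]; exact (hx a ha).le
      · exact hF a ha b hb hab

open Lagrange in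
lemma divided_diff {g : ℂ → ℂ} {R : ℝ} (hg : DifferentiableOn ℂ g (Metric.closedBall 0 R))
    (hR : 0 < R) {n : ℕ} (w : Fin (n + 1) → ℂ) (hw : Function.Injective w)
    (hwR : ∀ i, w i ∈ Metric.ball (0:ℂ) R) :
    ∮ z in C(0, R), (∏ i, (z - w i))⁻¹ • g z =
      (2 * Real.pi * Complex.I) * ∑ i, nodalWeight Finset.univ w i * g (w i) := by
  have hne : ∀ z ∈ Metric.sphere (0:ℂ) R, ∀ i, z ≠ w i := by
    rintro z hz i rfl
    have := hwR i
    rw [Metric.mem_sphere] at hz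
    rw [Metric.mem_ball] at this
    linarith
  have h1 : ∀ z ∈ Metric.sphere (0:ℂ) R, (∏ i, (z - w i))⁻¹ • g z =
      ∑ i, nodalWeight Finset.univ w i * ((z - w i)⁻¹ • g z) := by
    intro z hz
    have h2 := eval_interpolate_not_at_node (s := Finset.univ) (v := w) (x := z) 1
      (fun i _ => hne z hz i)
    rw [interpolate_one hw.injOn Finset.univ_nonempty, eval_nodal] at h2
    simp only [Polynomial.eval_one, Pi.one_apply, mul_one] at h2
    have h3 : (∏ i, (z - w i))⁻¹ = ∑ i, nodalWeight Finset.univ w i * (z - w i)⁻¹ :=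
      inv_eq_of_mul_eq_one_right h2.symm
    rw [h3, Finset.sum_smul]
    exact Finset.sum_congr rfl fun i _ => by simp [mul_assoc]
  rw [circleIntegral.integral_congr hR.le h1, circleIntegral.integral_fun_sum, Finset.mul_sum]
  · refine Finset.sum_congr rfl fun i _ => ?_
    rw [circleIntegral.integral_const_mul, hg.circleIntegral_sub_inv_smul (hwR i), smul_eq_mul]
    ring
  · intro i _
    refine ContinuousOn.circleIntegrable hR.le ?_
    simp only [smul_eq_mul]
    refine continuousOn_const.mul (ContinuousOn.mul ?_ (hg.continuousOn.mono Metric.sphere_subset_closedBall))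
    exact ContinuousOn.inv₀ (by fun_prop) fun z hz => sub_ne_zero.2 (hne z hz i)

lemma lower_bound (N : ℕ) (h : ℂ × ℂ → ℂ) (R : ℝ) (hR : 0 < R)
    (hh : DifferentiableOn ℂ h (Metric.closedBall 0 R))
    (hne : iteratedDeriv N (fun w : ℂ => h (0, w)) 0 ≠ 0) :
    ∃ δ > 0, ∃ r > 0, r < R ∧ ∀ z : ℂ, ‖z‖ < r → ∀ w : Fin (N + 1) → ℂ, (∀ i, ‖w i‖ < r) →
      δ ≤ ‖∮ ζ in C(0, R), (∏ i, (ζ - w i))⁻¹ • h (z, ζ)‖ := by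
  set P : Set (ℂ × (Fin (N+1) → ℂ)) := Metric.closedBall 0 (R/2) with hP
  have h0P : (0 : ℂ × (Fin (N+1) → ℂ)) ∈ P := by simp [hP]; positivity
  let G : P → ℂ := fun p => ∮ ζ in C(0, R), (∏ i, (ζ - p.1.2 i))⁻¹ • h (p.1.1, ζ)
  have hmem : ∀ p : P, ‖p.1.1‖ ≤ R/2 ∧ ∀ i, ‖p.1.2 i‖ ≤ R/2 := by
    intro p
    have := p.2
    simp only [hP, Metric.mem_closedBall, dist_zero_right, Prod.norm_def, sup_le_iff] at this
    exact ⟨this.1, fun i => (norm_le_pi_norm _ i).trans this.2⟩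
  have hGc : Continuous G := by
    refine intervalIntegral.continuous_parametric_intervalIntegral_of_continuous' ?_ _ _
    have hcm : Continuous (fun q : P × ℝ => circleMap (0:ℂ) R q.2) :=
      (continuous_circleMap 0 R).comp continuous_snd
    simp only [smul_eq_mul]
    refine Continuous.mul ?_ (Continuous.mul ?_ ?_)
    · simp only [deriv_circleMap]; fun_prop
    · refine Continuous.inv₀ ?_ ?_
      · refine continuous_finset_prod _ fun i _ => hcm.sub ?_
        fun_prop
      · intro q
        refine Finset.prod_ne_zero_iff.2 fun i _ => sub_ne_zero.2 fun e => ?_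
        have h1 := (hmem q.1).2 i
        rw [← e, norm_circleMap_zero, abs_of_pos hR] at h1
        linarith
    · refine hh.continuousOn.comp_continuous (f := fun q : P × ℝ => (q.1.1.1, circleMap (0:ℂ) R q.2))
        (Continuous.prodMk (by fun_prop) hcm) fun q => ?_
      have h1 := (hmem q.1).1
      simp only [Metric.mem_closedBall, dist_zero_right, Prod.norm_def, sup_le_iff,
        norm_circleMap_zero, abs_of_pos hR]
      exact ⟨by linarith, le_rfl⟩
  have hG0 : G ⟨0, h0P⟩ ≠ 0 := by
    have hd : DifferentiableOn ℂ (fun w : ℂ => h (0, w)) (Metric.closedBall 0 R) := by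
      refine hh.comp (f := fun w : ℂ => ((0:ℂ), w)) (by fun_prop) fun w hw => ?_
      simpa [Prod.norm_def, hR.le] using hw
    have := hd.circleIntegral_one_div_sub_center_pow_smul hR N
    have e : G ⟨0, h0P⟩ = ∮ z in C(0, R), (1 / (z - 0) ^ (N + 1)) • h (0, z) := by
      simp [G]
    rw [e, this]
    refine smul_ne_zero ?_ hne
    have := Nat.factorial_ne_zero N
    simp [Real.pi_ne_zero, this]
  have hev := (hGc.norm.tendsto ⟨0, h0P⟩).eventually (lt_mem_nhds (half_lt_self (norm_pos_iff.2 hG0)))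
  rw [Metric.eventually_nhds_iff] at hev
  obtain ⟨η, hη, H⟩ := hev
  refine ⟨‖G ⟨0, h0P⟩‖ / 2, by positivity, min η (R/2), by positivity,
    (min_le_right _ _).trans_lt (by linarith), fun z hz w hw => ?_⟩
  have hwn : ‖w‖ < min η (R/2) := (pi_norm_lt_iff (by positivity)).2 hw
  have hp : ‖(z, w)‖ < min η (R/2) := by
    rw [Prod.norm_def]; exact max_lt hz hwn
  have hpP : (z, w) ∈ P := by
    simpa [hP] using (hp.trans_le (min_le_right _ _)).le
  have := H (y := ⟨(z, w), hpP⟩) (by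
    rw [Subtype.dist_eq, dist_zero_right]; exact hp.trans_le (min_le_left _ _))
  exact this.le

open Lagrange in
lemma sublevel (N : ℕ) (hN : 1 ≤ N) (h : ℂ × ℂ → ℂ) (R : ℝ) (hR : 0 < R)
    (hh : DifferentiableOn ℂ h (Metric.closedBall 0 R))
    (hne : iteratedDeriv N (fun w : ℂ => h (0, w)) 0 ≠ 0) :
    ∃ K : ℝ, 0 ≤ K ∧ ∃ r > 0, r < R ∧ ∀ z : ℂ, ‖z‖ < r → ∀ ε : ℝ, 0 < ε →
      volume {w : ℂ | ‖w‖ < r ∧ ‖h (z, w)‖ ≤ ε} ≤ ENNReal.ofReal (K * ε ^ (2 / (N:ℝ))) := by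
  obtain ⟨δ, hδ, r, hr, hrR, H⟩ := lower_bound N h R hR hh hne
  have hpi := Real.pi_pos
  have hN0 : (0:ℝ) < N := by exact_mod_cast hN
  let A : ℝ := 2 * Real.pi * (N + 1) * 2 / δ
  have hA : 0 < A := by positivity
  refine ⟨N * (A ^ (2 / (N:ℝ)) * Real.pi), by positivity, r, hr, hrR, fun z hz ε hε => ?_⟩
  set E : Set ℂ := {w : ℂ | ‖w‖ < r ∧ ‖h (z, w)‖ ≤ ε} with hE
  set s : ℝ := (A * ε) ^ (1 / (N:ℝ)) with hs
  have hspos : 0 < s := by positivity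
  have hsN : s ^ N = A * ε := by
    rw [hs, ← Real.rpow_natCast, ← Real.rpow_mul (by positivity)]
    field_simp
    simp
  have hs2 : s ^ 2 = A ^ (2 / (N:ℝ)) * ε ^ (2 / (N:ℝ)) := by
    rw [← Real.mul_rpow hA.le hε.le, hs, ← Real.rpow_natCast, ← Real.rpow_mul (by positivity)]
    congr 1; push_cast; ring
  have hcov : ∃ F : Finset ℂ, F.card ≤ N ∧ E ⊆ ⋃ x ∈ F, Metric.closedBall x s := by
    by_contra hcon
    push Not at hcon
    obtain ⟨F, hFc, hFE, hF⟩ := exists_sep hspos.le hcon (N + 1) le_rfl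
    let e := (Finset.equivFinOfCardEq hFc).symm
    let w : Fin (N + 1) → ℂ := fun i => (e i : ℂ)
    have hwi : Function.Injective w := Subtype.val_injective.comp e.injective
    have hwE : ∀ i, ‖w i‖ < r ∧ ‖h (z, w i)‖ ≤ ε := fun i => hFE (e i).2
    have hlow := H z hz w fun i => (hwE i).1
    have hd : DifferentiableOn ℂ (fun w : ℂ => h (z, w)) (Metric.closedBall 0 R) := by
      refine hh.comp (f := fun w : ℂ => (z, w)) (by fun_prop) fun w hw => ?_
      simpa [Prod.norm_def, (hz.trans hrR).le] using hw
    rw [divided_diff hd hR w hwi fun i => by simpa using (hwE i).1.trans hrR] at hlow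
    have hup : ‖∑ i, nodalWeight Finset.univ w i * h (z, w i)‖ ≤ (N + 1) * ((s ^ N)⁻¹ * ε) := by
      refine (norm_sum_le _ _).trans ?_
      refine (Finset.sum_le_card_nsmul _ _ ((s ^ N)⁻¹ * ε) fun i _ => ?_).trans (by simp)
      rw [norm_mul]
      refine mul_le_mul ?_ (hwE i).2 (norm_nonneg _) (by positivity)
      rw [nodalWeight, norm_prod]
      calc _ ≤ ∏ j ∈ Finset.univ.erase i, s⁻¹ := by
            refine Finset.prod_le_prod (fun _ _ => norm_nonneg _) fun j hj => ?_
            rw [norm_inv]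
            refine inv_anti₀ hspos ?_
            rw [← dist_eq_norm]
            exact hF _ (e i).2 _ (e j).2 fun e' => (Finset.mem_erase.1 hj).1 (hwi e').symm
        _ = _ := by simp
    rw [norm_mul, hsN] at *
    have h2 : ‖(2 * Real.pi * Complex.I : ℂ)‖ = 2 * Real.pi := by
      simp [abs_of_pos hpi]
    rw [h2] at hlow
    have h3 := mul_le_mul_of_nonneg_left hup (by positivity : (0:ℝ) ≤ 2 * Real.pi)
    have h4 : 2 * Real.pi * ((N + 1) * ((A * ε)⁻¹ * ε)) = δ / 2 := by
      simp only [A]; field_simp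
    linarith
  obtain ⟨F, hFc, hF⟩ := hcov
  calc volume E ≤ volume (⋃ x ∈ F, Metric.closedBall x s) := measure_mono hF
    _ ≤ ∑ x ∈ F, volume (Metric.closedBall x s) := measure_biUnion_finset_le _ _
    _ = F.card * ENNReal.ofReal (s ^ 2 * Real.pi) := by
        have hv : ∀ x : ℂ, volume (Metric.closedBall x s) = ENNReal.ofReal (s ^ 2 * Real.pi) := by
          intro x
          rw [Complex.volume_closedBall, ENNReal.ofReal_mul (by positivity), ENNReal.ofReal_pow hspos.le,
            ← NNReal.coe_real_pi, ENNReal.ofReal_coe_nnreal]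
        simp [hv]
    _ ≤ N * ENNReal.ofReal (s ^ 2 * Real.pi) := by gcongr
    _ = _ := by
        rw [← ENNReal.ofReal_natCast, ← ENNReal.ofReal_mul hN0.le, hs2]
        congr 1; ring
/-- Integrability claim in Case 2 of the proof of Theorem 4.1: let `k ≥ 1` and let
`h` be holomorphic near `0 ∈ ℂ²` with vanishing order `4k` at `0`, such that the
line `{z₁ = 0}` is not tangent to the zero set of `h` at `0`, in the sense that
`z₂ ↦ h(0, z₂)` has vanishing order exactly `4k` at `0`. Then for
`f(z₁,z₂) = z₁^k · h(z₁,z₂)` and every `0 < c < 1/(4k)`, the function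
`‖f‖ ^ (-2c)` is integrable on some open neighborhood of `0`. -/
theorem case_two_integrability
    (k : ℕ) (hk : 1 ≤ k)
    (h : ℂ × ℂ → ℂ) (U : Set (ℂ × ℂ)) (hU : IsOpen U) (h0U : (0 : ℂ × ℂ) ∈ U)
    (hh : DifferentiableOn ℂ h U)
    (horder_lt : ∀ j < 4 * k, iteratedFDeriv ℂ j h 0 = 0)
    (horder_ne : iteratedFDeriv ℂ (4 * k) h 0 ≠ 0)
    (htang_lt : ∀ j < 4 * k, iteratedDeriv j (fun w : ℂ => h (0, w)) 0 = 0)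
    (htang_ne : iteratedDeriv (4 * k) (fun w : ℂ => h (0, w)) 0 ≠ 0)
    (c : ℝ) (hc0 : 0 < c) (hc : c < 1 / (4 * (k : ℝ))) :
    ∃ V : Set (ℂ × ℂ), IsOpen V ∧ (0 : ℂ × ℂ) ∈ V ∧
      IntegrableOn (fun z : ℂ × ℂ => ‖z.1 ^ k * h z‖ ^ (-(2 * c))) V volume := by
  have hk0 : (0:ℝ) < k := by exact_mod_cast hk
  have hck : c * (4 * k) < 1 := by rwa [lt_div_iff₀ (by positivity)] at hc
  obtain ⟨R, hR, hRU⟩ := Metric.nhds_basis_closedBall.mem_iff.1 (hU.mem_nhds h0U)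
  obtain ⟨K, hK, r, hr, hrR, H⟩ := sublevel (4 * k) (by omega) h R hR (hh.mono hRU) htang_ne
  have hBU : Metric.ball (0:ℂ × ℂ) r ⊆ U :=
    (Metric.ball_subset_closedBall.trans (Metric.closedBall_subset_closedBall hrR.le)).trans hRU
  have hprod : Metric.ball (0:ℂ × ℂ) r = Metric.ball (0:ℂ) r ×ˢ Metric.ball (0:ℂ) r :=
    (ball_prod_same _ _ _).symm
  have hcont : ContinuousOn h (Metric.ball (0:ℂ × ℂ) r) := hh.continuousOn.mono hBU
  refine ⟨Metric.ball 0 r, Metric.isOpen_ball, Metric.mem_ball_self hr, ?_, ?_⟩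
  · have h1 : ContinuousOn (fun z : ℂ × ℂ => ‖z.1 ^ k * h z‖) (Metric.ball (0:ℂ × ℂ) r) :=
      (ContinuousOn.mul (by fun_prop) hcont).norm
    exact ((h1.aemeasurable Metric.isOpen_ball.measurableSet).pow_const _).aestronglyMeasurable
  set B : Set ℂ := Metric.ball (0:ℂ) r with hB
  have hBvol : volume B < ⊤ := Metric.isBounded_ball.measure_lt_top
  -- inner bound
  have hin : ∃ M : ENNReal, M < ⊤ ∧ ∀ z ∈ B,
      ∫⁻ w in B, ENNReal.ofReal (‖h (z, w)‖ ^ (-(2 * c))) ≤ M := by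
    refine ⟨_, ENNReal.add_lt_top.2 ⟨hBvol, ENNReal.ofReal_lt_top
      (r := ∫ t in Set.Ioi (1:ℝ), K * t ^ (-((2 / ((4 * k : ℕ):ℝ)) / (2 * c))))⟩, fun z hz => ?_⟩
    have hm : ContinuousOn (fun w : ℂ => ‖h (z, w)‖) B := by
      refine ContinuousOn.norm (hcont.comp (f := fun w : ℂ => (z, w)) (by fun_prop) fun w hw => ?_)
      rw [hprod]; exact ⟨hz, hw⟩
    have hlt : 2 * c < 2 / ((4 * k : ℕ):ℝ) := by
      push_cast
      rw [lt_div_iff₀ (by positivity)]; linarith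
    have := layer_bound (volume.restrict B) (fun w => ‖h (z, w)‖) (fun _ => norm_nonneg _)
      (hm.aemeasurable Metric.isOpen_ball.measurableSet) K (2 * c) _ hK (by positivity) hlt
      (fun ε hε => by
        rw [Measure.restrict_apply' Metric.isOpen_ball.measurableSet]
        refine (measure_mono fun w hw => ?_).trans (H z (by simpa [hB] using hz) ε hε)
        exact ⟨by simpa [hB] using hw.2, hw.1⟩)
    simpa using this
  -- outer bound
  have hout : ∫⁻ z in B, ENNReal.ofReal (‖z‖ ^ (-(2 * c * k))) < ⊤ := by
    refine (layer_bound (volume.restrict B) (fun w => ‖w‖) (fun _ => norm_nonneg _)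
      measurable_norm.aemeasurable Real.pi (2 * c * k) 2 Real.pi_pos.le (by positivity)
      (by nlinarith) (fun ε hε => ?_)).trans_lt (ENNReal.add_lt_top.2
        ⟨by simpa using hBvol, ENNReal.ofReal_lt_top⟩)
    refine (Measure.restrict_apply_le _ _).trans ?_
    have e : {x : ℂ | ‖x‖ ≤ ε} = Metric.closedBall 0 ε := by ext; simp
    rw [e, Complex.volume_closedBall, mul_comm, ENNReal.ofReal_mul Real.pi_pos.le, Real.rpow_two,
      ENNReal.ofReal_pow hε.le, ← NNReal.coe_real_pi, ENNReal.ofReal_coe_nnreal]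
  obtain ⟨M, hM, hin⟩ := hin
  rw [hasFiniteIntegral_iff_ofReal (Filter.Eventually.of_forall fun z => by positivity), hprod,
    Measure.volume_eq_prod, ← Measure.prod_restrict]
  refine (lintegral_prod_le _).trans_lt ?_
  calc _ ≤ ∫⁻ z in B, ENNReal.ofReal (‖z‖ ^ (-(2 * c * k))) * M := by
        refine setLIntegral_mono' Metric.isOpen_ball.measurableSet fun z hz => ?_
        have e : ∀ w : ℂ, ENNReal.ofReal (‖z ^ k * h (z, w)‖ ^ (-(2 * c))) =
            ENNReal.ofReal (‖z‖ ^ (-(2 * c * k))) * ENNReal.ofReal (‖h (z, w)‖ ^ (-(2 * c))) := by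
          intro w
          rw [← ENNReal.ofReal_mul (by positivity), norm_mul, norm_pow,
            Real.mul_rpow (by positivity) (by positivity), ← Real.rpow_natCast,
            ← Real.rpow_mul (norm_nonneg _)]
          congr 4; ring
        simp only [e]
        rw [lintegral_const_mul' _ _ ENNReal.ofReal_ne_top]
        gcongr
        exact hin z hz
    _ = (∫⁻ z in B, ENNReal.ofReal (‖z‖ ^ (-(2 * c * k)))) * M := lintegral_mul_const' _ _ hM.ne
    _ < ⊤ := ENNReal.mul_lt_top hout hM
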